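/- arXiv:2110.09014 — 3 statements merged into one kernel-verified Lean document; each statement's English description precedes it below -/
import Mathlib

section
/- Let N ⊆ 𝔼 and let X = {b₁, b₂, b₃, d} ∪ {ℓᵢ : i ≥ 0}. Then X ∈ D_N, X ≠ ∅, X ≠ W, ◇_N X = W, and ◇_N(∼X) = W. Consequently {∅, X, ∼X, W} is a subalgebra of the complex algebra of 𝔽_N isomorphic to the complex algebra of the two-element cluster 𝕂₂ (the total relation on two points). -/
/-!
Walking from `d` along the path `d, c₁, b₁, a` and removing, after each `◇`, the points already
isolated shows that `{c₁}`, `{b₁}` and `{a}` lie in `D_N`. The neighbours of `a` are exactly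
`b₁, b₂, b₃` and the `ℓᵢ`, so `X = (◇{a} ∖ {a}) ∪ {d}` lies in `D_N` as well.

Both `X` and `∼X` dominate the frame: every `uᵢ` sees `ℓᵢ`, every `cᵢ` sees `bᵢ`, all of
`b₁, b₂, b₃, ℓᵢ` see `a`, `a` sees `b₁` and `d` sees `c₁`. Hence the characteristic function `W → Bool` of `X`
is a surjective p-morphism onto `𝕂₂`, and taking preimages under it is the required embedding.
-/


/-- Vertices of the frame `𝔽_N`.  `u n` denotes the vertex `u_{n+1}` of the paper
(so that `u 0, u 1, …` enumerate `u₁, u₂, …`), and `l n` denotes `ℓ_n`. -/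
inductive V : Type
  | a | b1 | b2 | b3 | c1 | c2 | d
  | u (n : ℕ)
  | l (n : ℕ)
  deriving DecidableEq

/-- `𝔼`, the set of positive even integers. -/
def EE : Set ℕ := {n | Even n ∧ 0 < n}

/-- The edges of the frame `𝔽_N` (one direction of each edge; loops are added in `R`).
Recall that `V.u n` denotes `u_{n+1}`. -/
inductive E (N : Set ℕ) : V → V → Prop
  | ab1 : E N .a .b1
  | ab2 : E N .a .b2
  | ab3 : E N .a .b3
  | b1c1 : E N .b1 .c1
  | b2c2 : E N .b2 .c2
  | c1d : E N .c1 .d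
  | l0l1 : E N (.l 0) (.l 1)
  /-- `{a, ℓᵢ}` for every `i ≥ 0` -/
  | al (i : ℕ) : E N .a (.l i)
  /-- `{ℓᵢ, uᵢ}` for every `i ≥ 1` (here `i = j + 1`) -/
  | lu (j : ℕ) : E N (.l (j + 1)) (.u j)
  /-- `{ℓᵢ, u_{i-1}}` for every even `i ≥ 2` (here `i = j + 2`) -/
  | ldown (j : ℕ) (hj : Even j) : E N (.l (j + 2)) (.u j)
  /-- `{ℓᵢ, u_{i+1}}` for every `i ∈ N` -/
  | lN (i : ℕ) (hi : i ∈ N) : E N (.l i) (.u i)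
  /-- `{ℓ_{i+1}, uᵢ}` for every even `i ≥ 2` with `i ∉ N` (here `i = j + 2`) -/
  | lnN (j : ℕ) (hj : Even j) (hjN : j + 2 ∉ N) : E N (.l (j + 3)) (.u (j + 1))

/-- The accessibility relation `R_N`: the reflexive symmetric closure of the edges. -/
def R (N : Set ℕ) (x y : V) : Prop := x = y ∨ E N x y ∨ E N y x

/-- `◇_N X = {w : ∃ v ∈ X, v R_N w}`. -/
def dia (N : Set ℕ) (X : Set V) : Set V := {w | ∃ v ∈ X, R N v w}

/-- `D_N`: the smallest collection of subsets of `W` containing `{d}` and closed under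
union, complement and `◇_N`. -/
inductive DN (N : Set ℕ) : Set V → Prop
  | base : DN N {V.d}
  | union {X Y : Set V} : DN N X → DN N Y → DN N (X ∪ Y)
  | compl {X : Set V} : DN N X → DN N Xᶜ
  | diam {X : Set V} : DN N X → DN N (dia N X)

/-- `◇` of the complex algebra of `𝕂₂`, the total relation on the two-element set. -/
def K2dia (S : Set Bool) : Set Bool := {w | ∃ v, v ∈ S}

theorem DN.diff {N : Set ℕ} {X Y : Set V} (hX : DN N X) (hY : DN N Y) : DN N (X \ Y) := by
  have h := (hX.compl.union hY).compl
  rwa [Set.compl_union, compl_compl, ← Set.sdiff_eq] at h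

theorem mem_dia_singleton {N : Set ℕ} {x w : V} :
    w ∈ dia N {x} ↔ x = w ∨ E N x w ∨ E N w x := by
  simp [dia, R]

theorem dia_d (N : Set ℕ) : dia N {V.d} = {V.d, V.c1} := by
  ext w
  rw [mem_dia_singleton]
  constructor
  · rintro (rfl | h | h)
    · simp
    all_goals cases h <;> simp
  · rintro (rfl | rfl)
    exacts [.inl rfl, .inr (.inr .c1d)]

theorem dia_c1 (N : Set ℕ) : dia N {V.c1} = {V.c1, V.d, V.b1} := by
  ext w
  rw [mem_dia_singleton]
  constructor
  · rintro (rfl | h | h)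
    · simp
    all_goals cases h <;> simp
  · rintro (rfl | rfl | rfl)
    exacts [.inl rfl, .inr (.inl .c1d), .inr (.inr .b1c1)]

theorem dia_b1 (N : Set ℕ) : dia N {V.b1} = {V.b1, V.c1, V.a} := by
  ext w
  rw [mem_dia_singleton]
  constructor
  · rintro (rfl | h | h)
    · simp
    all_goals cases h <;> simp
  · rintro (rfl | rfl | rfl)
    exacts [.inl rfl, .inr (.inl .b1c1), .inr (.inr .ab1)]

theorem dia_a (N : Set ℕ) :
    dia N {V.a} = ({V.a, V.b1, V.b2, V.b3} : Set V) ∪ Set.range V.l := by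
  ext w
  rw [mem_dia_singleton]
  constructor
  · rintro (rfl | h | h)
    · simp
    all_goals cases h <;> simp
  · rintro ((rfl | rfl | rfl | rfl) | ⟨i, rfl⟩)
    exacts [.inl rfl, .inr (.inl .ab1), .inr (.inl .ab2), .inr (.inl .ab3), .inr (.inl (.al i))]

theorem DN_a (N : Set ℕ) : DN N {V.a} := by
  have hc : DN N {V.c1} := by
    convert (DN.base (N := N)).diam.diff .base using 1
    rw [dia_d]; ext w; cases w <;> simp
  have hb : DN N {V.b1} := by
    convert hc.diam.diff (hc.union .base) using 1
    rw [dia_c1]; ext w; cases w <;> simp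
  convert hb.diam.diff (hb.union hc) using 1
  rw [dia_b1]; ext w; cases w <;> simp

/-- The set `X = {b₁, b₂, b₃, d} ∪ {ℓᵢ : i ≥ 0}`. -/
def clusterSet : Set V := ({V.b1, V.b2, V.b3, V.d} : Set V) ∪ Set.range V.l

theorem DN_clusterSet (N : Set ℕ) : DN N clusterSet := by
  convert ((DN_a N).diam.diff (DN_a N)).union .base using 1
  rw [dia_a]; ext w; cases w <;> simp [clusterSet]

theorem dia_clusterSet (N : Set ℕ) : dia N clusterSet = Set.univ := by
  refine Set.eq_univ_of_forall fun w => ?_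
  cases w with
  | a => exact ⟨.b1, by simp [clusterSet], .inr (.inr .ab1)⟩
  | b1 => exact ⟨.b1, by simp [clusterSet], .inl rfl⟩
  | b2 => exact ⟨.b2, by simp [clusterSet], .inl rfl⟩
  | b3 => exact ⟨.b3, by simp [clusterSet], .inl rfl⟩
  | c1 => exact ⟨.b1, by simp [clusterSet], .inr (.inl .b1c1)⟩
  | c2 => exact ⟨.b2, by simp [clusterSet], .inr (.inl .b2c2)⟩
  | d => exact ⟨.d, by simp [clusterSet], .inl rfl⟩
  | u n => exact ⟨.l (n + 1), by simp [clusterSet], .inr (.inl (.lu n))⟩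
  | l n => exact ⟨.l n, by simp [clusterSet], .inl rfl⟩

theorem dia_compl_clusterSet (N : Set ℕ) : dia N clusterSetᶜ = Set.univ := by
  refine Set.eq_univ_of_forall fun w => ?_
  cases w with
  | a => exact ⟨.a, by simp [clusterSet], .inl rfl⟩
  | b1 => exact ⟨.a, by simp [clusterSet], .inr (.inl .ab1)⟩
  | b2 => exact ⟨.a, by simp [clusterSet], .inr (.inl .ab2)⟩
  | b3 => exact ⟨.a, by simp [clusterSet], .inr (.inl .ab3)⟩
  | c1 => exact ⟨.c1, by simp [clusterSet], .inl rfl⟩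
  | c2 => exact ⟨.c2, by simp [clusterSet], .inl rfl⟩
  | d => exact ⟨.c1, by simp [clusterSet], .inr (.inl .c1d)⟩
  | u n => exact ⟨.u n, by simp [clusterSet], .inl rfl⟩
  | l n => exact ⟨.a, by simp [clusterSet], .inr (.inl (.al n))⟩

theorem dia_mono (N : Set ℕ) {X Y : Set V} (h : X ⊆ Y) : dia N X ⊆ dia N Y :=
  fun _ ⟨v, hv, hR⟩ => ⟨v, h hv, hR⟩

/-- For `N ⊆ 𝔼` and `X = {b₁, b₂, b₃, d} ∪ {ℓᵢ : i ≥ 0}`: `X ∈ D_N`, `X ≠ ∅`, `X ≠ W`,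
`◇_N X = W` and `◇_N(∼X) = W`; consequently `{∅, X, ∼X, W}` is a subalgebra of the
complex algebra of `𝔽_N` isomorphic to the complex algebra of `𝕂₂`. -/
theorem K2_embeds (N : Set ℕ) (hN : N ⊆ EE)
    (X : Set V) (hX : X = ({V.b1, V.b2, V.b3, V.d} : Set V) ∪ Set.range V.l) :
    DN N X ∧ X ≠ ∅ ∧ X ≠ Set.univ ∧ dia N X = Set.univ ∧ dia N Xᶜ = Set.univ ∧
    ∃ e : Set Bool → Set V,
      Function.Injective e ∧
      Set.range e = {∅, X, Xᶜ, Set.univ} ∧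
      e ∅ = ∅ ∧ e Set.univ = Set.univ ∧
      (∀ S T : Set Bool, e (S ∪ T) = e S ∪ e T) ∧
      (∀ S : Set Bool, e Sᶜ = (e S)ᶜ) ∧
      (∀ S : Set Bool, e (K2dia S) = dia N (e S)) := by
  change X = clusterSet at hX
  subst hX
  have hb : V.b1 ∈ clusterSet := by simp [clusterSet]
  have ha : V.a ∉ clusterSet := by simp [clusterSet]
  refine ⟨DN_clusterSet N, fun h => by simp [h] at hb, fun h => by simp [h] at ha,
    dia_clusterSet N, dia_compl_clusterSet N, ?_⟩
  classical
  -- The quotient map onto `𝕂₂`: the point `true` has fibre `X`, the point `false` has fibre `∼X`.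
  let f : V → Bool := fun w => decide (w ∈ clusterSet)
  have hf : Function.Surjective f := by
    rintro (_ | _)
    exacts [⟨.a, decide_eq_false ha⟩, ⟨.b1, decide_eq_true hb⟩]
  have ht : f ⁻¹' {true} = clusterSet := by ext w; simp [f]
  have hff : f ⁻¹' {false} = clusterSetᶜ := by ext w; simp [f]
  refine ⟨fun S => f ⁻¹' S, hf.preimage_injective, ?_, rfl, rfl, fun _ _ => rfl, fun _ => rfl, ?_⟩
  · ext Y
    constructor
    · rintro ⟨S, rfl⟩
      have hS : S = ∅ ∨ S = {true} ∨ S = {false} ∨ S = Set.univ := by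
        by_cases h1 : true ∈ S <;> by_cases h2 : false ∈ S <;>
          simp [Set.ext_iff, h1, h2]
      rcases hS with rfl | rfl | rfl | rfl
      · exact .inl rfl
      · exact .inr (.inl ht)
      · exact .inr (.inr (.inl hff))
      · exact .inr (.inr (.inr rfl))
    · rintro (rfl | rfl | rfl | rfl)
      exacts [⟨∅, rfl⟩, ⟨{true}, ht⟩, ⟨{false}, hff⟩, ⟨Set.univ, rfl⟩]
  · intro S
    change f ⁻¹' (K2dia S) = dia N (f ⁻¹' S)
    rcases S.eq_empty_or_nonempty with rfl | ⟨b, hbS⟩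
    · ext w; simp [K2dia, dia]
    · have hK : K2dia S = Set.univ := Set.eq_univ_of_forall fun _ => ⟨b, hbS⟩
      -- A nonempty `S` contains a point, whose fibre `X` or `∼X` already dominates the frame.
      have hsub : dia N (f ⁻¹' {b}) ⊆ dia N (f ⁻¹' S) :=
        dia_mono N (Set.preimage_mono (Set.singleton_subset_iff.2 hbS))
      have huniv : dia N (f ⁻¹' {b}) = Set.univ := by
        cases b
        · rw [hff, dia_compl_clusterSet]
        · rw [ht, dia_clusterSet]
      rw [hK, Set.preimage_univ]
      exact (Set.univ_subset_iff.1 (huniv ▸ hsub)).symm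
end

section
/- Let N ⊆ 𝔼 and let X ∈ D_N with X ≠ ∅ and ◇_N⁴ X ≠ W (where ◇_N⁴ is the 4-fold iterate of ◇_N). Then X = {d} or ◇_N⁴ X = W ∖ {d}. -/
theorem R.symm {N : Set ℕ} {x y : V} (h : R N x y) : R N y x := by
  rcases h with h | h | h
  · exact Or.inl h.symm
  · exact Or.inr (Or.inr h)
  · exact Or.inr (Or.inl h)

/-- Every vertex other than `d` is within two steps of `a`. -/
theorem exists_mid (N : Set ℕ) (x : V) (hx : x ≠ V.d) : ∃ y, R N x y ∧ R N y V.a := by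
  cases x with
  | a => exact ⟨.a, Or.inl rfl, Or.inl rfl⟩
  | b1 => exact ⟨.b1, Or.inl rfl, Or.inr (Or.inr .ab1)⟩
  | b2 => exact ⟨.b2, Or.inl rfl, Or.inr (Or.inr .ab2)⟩
  | b3 => exact ⟨.b3, Or.inl rfl, Or.inr (Or.inr .ab3)⟩
  | c1 => exact ⟨.b1, Or.inr (Or.inr .b1c1), Or.inr (Or.inr .ab1)⟩
  | c2 => exact ⟨.b2, Or.inr (Or.inr .b2c2), Or.inr (Or.inr .ab2)⟩
  | d => exact absurd rfl hx
  | u n => exact ⟨.l (n + 1), Or.inr (Or.inr (.lu n)), Or.inr (Or.inr (.al _))⟩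
  | l n => exact ⟨.l n, Or.inl rfl, Or.inr (Or.inr (.al n))⟩

/-- For `N ⊆ 𝔼` and `X ∈ D_N` with `X ≠ ∅` and `◇_N⁴ X ≠ W`: either `X = {d}` or
`◇_N⁴ X = W ∖ {d}`. -/
theorem dia_four_dichotomy (N : Set ℕ) (hN : N ⊆ EE)
    (X : Set V) (hX : DN N X) (hne : X ≠ ∅)
    (h : (dia N)^[4] X ≠ Set.univ) :
    X = {V.d} ∨ (dia N)^[4] X = {V.d}ᶜ := by
  by_cases hXd : X = {V.d}
  · exact Or.inl hXd
  right
  obtain ⟨x, hxX, hxd⟩ : ∃ x ∈ X, x ≠ V.d := by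
    by_contra! hall
    exact hXd (Set.eq_singleton_iff_nonempty_unique_mem.2
      ⟨Set.nonempty_iff_ne_empty.2 hne, hall⟩)
  have hsub : ∀ w, w ≠ V.d → w ∈ (dia N)^[4] X := by
    intro w hw
    obtain ⟨y, hxy, hya⟩ := exists_mid N x hxd
    obtain ⟨z, hwz, hza⟩ := exists_mid N w hw
    exact ⟨z, ⟨V.a, ⟨y, ⟨x, hxX, hxy⟩, hya⟩, hza.symm⟩, hwz.symm⟩
  have hd : V.d ∉ (dia N)^[4] X := by
    intro hd
    refine h (Set.eq_univ_of_forall fun w => ?_)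
    by_cases hw : w = V.d
    · exact hw ▸ hd
    · exact hsub w hw
  ext w
  exact ⟨fun hw hwd => hd (Set.mem_singleton_iff.1 hwd ▸ hw), hsub w⟩
end

section
/- The family {D_N : N ⊆ 𝔼} consists of continuum many pairwise non-isomorphic algebras: for M, N ⊆ 𝔼 with M ≠ N there is no bijection u between D_M and D_N satisfying u(∅) = ∅, u(W) = W, u(X ∪ Y) = u(X) ∪ u(Y), u(∼X) = ∼u(X), and u(◇_M X) = ◇_N u(X) for all X, Y ∈ D_M, and the set of subsets of 𝔼 has cardinality 2^ℵ₀. -/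
/-- An isomorphism of the algebra `D_M` onto the algebra `D_N`: a bijection between
`D_M` and `D_N` preserving `∅`, `W`, union, complement and `◇`. -/
def IsIso (M N : Set ℕ) (u : Set V → Set V) : Prop :=
  (∀ X : Set V, DN M X → DN N (u X)) ∧
  (∀ X Y : Set V, DN M X → DN M Y → u X = u Y → X = Y) ∧
  (∀ Y : Set V, DN N Y → ∃ X : Set V, DN M X ∧ u X = Y) ∧
  u ∅ = ∅ ∧
  u Set.univ = Set.univ ∧
  (∀ X Y : Set V, DN M X → DN M Y → u (X ∪ Y) = u X ∪ u Y) ∧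
  (∀ X : Set V, DN M X → u Xᶜ = (u X)ᶜ) ∧
  (∀ X : Set V, DN M X → u (dia M X) = dia N (u X))

/-! ### Neighbourhoods in the frame -/

/-- Adjacency of `V.l i` and `V.u j` (that is, of `ℓ_i` and `u_{j+1}`) in `𝔽_N`. -/
def LU (N : Set ℕ) (i j : ℕ) : Prop :=
  i = j + 1 ∨ (Even j ∧ i = j + 2) ∨ (i = j ∧ j ∈ N) ∨ (¬ Even j ∧ i = j + 2 ∧ j + 1 ∉ N)

theorem R_lu (N : Set ℕ) (i j : ℕ) : R N (.l i) (.u j) ↔ LU N i j := by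
  unfold R LU
  constructor
  · rintro (h | h | h)
    · cases h
    · cases h with
      | lu => simp
      | ldown _ h => simp [h]
      | lN _ h => simp [h]
      | lnN j hj h =>
        right; right; right
        exact ⟨by simpa [Nat.even_add_one] using hj, rfl, h⟩
    · cases h
  · rintro (rfl | ⟨h, rfl⟩ | ⟨rfl, h⟩ | ⟨h, rfl, h'⟩)
    · exact .inr (.inl (.lu _))
    · exact .inr (.inl (.ldown _ h))
    · exact .inr (.inl (.lN _ h))
    · obtain ⟨k, rfl⟩ : ∃ k, j = k + 1 := ⟨j - 1, by grind⟩
      exact .inr (.inl (.lnN k (by grind) h'))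

theorem R_symm (N : Set ℕ) (x y : V) : R N x y ↔ R N y x := by
  unfold R
  constructor <;> (rintro (h | h | h) <;> simp [h])

theorem R_ul (N : Set ℕ) (i j : ℕ) : R N (.u j) (.l i) ↔ LU N i j := by
  rw [R_symm, R_lu]

section
variable (N : Set ℕ) (X : Set V)

theorem mem_a : V.a ∈ dia N X ↔
    .a ∈ X ∨ .b1 ∈ X ∨ .b2 ∈ X ∨ .b3 ∈ X ∨ ∃ i, .l i ∈ X := by
  constructor
  · rintro ⟨v, hv, h | h | h⟩ <;> cases h <;> grind
  · rintro (h | h | h | h | ⟨i, h⟩)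
    · exact ⟨_, h, .inl rfl⟩
    · exact ⟨_, h, .inr (.inr .ab1)⟩
    · exact ⟨_, h, .inr (.inr .ab2)⟩
    · exact ⟨_, h, .inr (.inr .ab3)⟩
    · exact ⟨_, h, .inr (.inr (.al i))⟩

theorem mem_b1 : V.b1 ∈ dia N X ↔ .b1 ∈ X ∨ .a ∈ X ∨ .c1 ∈ X := by
  constructor
  · rintro ⟨v, hv, h | h | h⟩ <;> cases h <;> grind
  · rintro (h | h | h)
    · exact ⟨_, h, .inl rfl⟩
    · exact ⟨_, h, .inr (.inl .ab1)⟩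
    · exact ⟨_, h, .inr (.inr .b1c1)⟩

theorem mem_b2 : V.b2 ∈ dia N X ↔ .b2 ∈ X ∨ .a ∈ X ∨ .c2 ∈ X := by
  constructor
  · rintro ⟨v, hv, h | h | h⟩ <;> cases h <;> grind
  · rintro (h | h | h)
    · exact ⟨_, h, .inl rfl⟩
    · exact ⟨_, h, .inr (.inl .ab2)⟩
    · exact ⟨_, h, .inr (.inr .b2c2)⟩

theorem mem_b3 : V.b3 ∈ dia N X ↔ .b3 ∈ X ∨ .a ∈ X := by
  constructor
  · rintro ⟨v, hv, h | h | h⟩ <;> cases h <;> grind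
  · rintro (h | h)
    · exact ⟨_, h, .inl rfl⟩
    · exact ⟨_, h, .inr (.inl .ab3)⟩

theorem mem_c1 : V.c1 ∈ dia N X ↔ .c1 ∈ X ∨ .b1 ∈ X ∨ .d ∈ X := by
  constructor
  · rintro ⟨v, hv, h | h | h⟩ <;> cases h <;> grind
  · rintro (h | h | h)
    · exact ⟨_, h, .inl rfl⟩
    · exact ⟨_, h, .inr (.inl .b1c1)⟩
    · exact ⟨_, h, .inr (.inr .c1d)⟩

theorem mem_c2 : V.c2 ∈ dia N X ↔ .c2 ∈ X ∨ .b2 ∈ X := by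
  constructor
  · rintro ⟨v, hv, h | h | h⟩ <;> cases h <;> grind
  · rintro (h | h)
    · exact ⟨_, h, .inl rfl⟩
    · exact ⟨_, h, .inr (.inl .b2c2)⟩

theorem mem_d : V.d ∈ dia N X ↔ .d ∈ X ∨ .c1 ∈ X := by
  constructor
  · rintro ⟨v, hv, h | h | h⟩ <;> cases h <;> grind
  · rintro (h | h)
    · exact ⟨_, h, .inl rfl⟩
    · exact ⟨_, h, .inr (.inl .c1d)⟩

theorem mem_u (j : ℕ) : V.u j ∈ dia N X ↔ .u j ∈ X ∨ ∃ i, LU N i j ∧ .l i ∈ X := by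
  constructor
  · rintro ⟨v, hv, h⟩
    cases v with
    | l i => exact .inr ⟨i, (R_lu N i j).1 h, hv⟩
    | _ => rcases h with h | h | h <;> cases h <;> exact .inl hv
  · rintro (h | ⟨i, h, hX⟩)
    · exact ⟨_, h, .inl rfl⟩
    · exact ⟨_, hX, (R_lu N i j).2 h⟩

theorem mem_l (i : ℕ) : V.l i ∈ dia N X ↔ .l i ∈ X ∨ .a ∈ X ∨ (i = 0 ∧ .l 1 ∈ X) ∨
    (i = 1 ∧ .l 0 ∈ X) ∨ ∃ j, LU N i j ∧ .u j ∈ X := by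
  constructor
  · rintro ⟨v, hv, h⟩
    cases v with
    | u j => exact .inr (.inr (.inr (.inr ⟨j, (R_ul N i j).1 h, hv⟩)))
    | _ => rcases h with h | h | h <;> cases h <;> simp [hv]
  · rintro (h | h | ⟨rfl, h⟩ | ⟨rfl, h⟩ | ⟨j, h, hX⟩)
    · exact ⟨_, h, .inl rfl⟩
    · exact ⟨_, h, .inr (.inl (.al i))⟩
    · exact ⟨_, h, .inr (.inr .l0l1)⟩
    · exact ⟨_, h, .inr (.inl .l0l1)⟩
    · exact ⟨_, hX, (R_ul N i j).2 h⟩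

theorem subset_dia : X ⊆ dia N X := fun x hx => ⟨x, hx, .inl rfl⟩

end

/-! ### Recognising `{d}` -/

theorem mem_dia_dia_of_a {N : Set ℕ} {X : Set V} (h : V.a ∈ X) {x : V} (hx : x ≠ .d) :
    x ∈ dia N (dia N X) := by
  cases x with
  | d => exact absurd rfl hx
  | u j =>
    rw [mem_u]
    exact .inr ⟨j + 1, .inl rfl, by simp [mem_l, h]⟩
  | _ => simp [mem_a, mem_b1, mem_b2, mem_b3, mem_c1, mem_c2, mem_l, h]

theorem a_mem_dia_dia {N : Set ℕ} {A : Set V} {x : V} (hx : x ∈ A) (hd : x ≠ .d) :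
    V.a ∈ dia N (dia N A) := by
  cases x with
  | d => exact absurd rfl hd
  | u j =>
    rw [mem_a]
    exact .inr (.inr (.inr (.inr ⟨j + 1, (mem_l ..).2
      (.inr (.inr (.inr (.inr ⟨j, .inl rfl, hx⟩))))⟩)))
  | l j =>
    apply subset_dia
    rw [mem_a]
    exact .inr (.inr (.inr (.inr ⟨j, hx⟩)))
  | _ => simp [mem_a, mem_b1, mem_b2, hx]

/-- Every vertex other than `d` has distance at most `4` to all vertices, except possibly `d`;
only `c₂` and the `uᵢ` have distance `5` to `d`. So a set `A` satisfying the hypotheses and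
containing a vertex other than `d` has `∼◇⁴A = {d}`, and then `b₃` is not covered. -/
theorem eq_singleton_d {N : Set ℕ} {A : Set V} (hne : A ≠ ∅)
    (hB : (dia N (dia N (dia N (dia N A))))ᶜ ≠ ∅)
    (hcov : dia N (dia N (dia N (dia N (dia N (dia N (dia N A))))ᶜ)) ∪ dia N A = Set.univ) :
    A = {.d} := by
  have key : ∀ x ∈ A, x = V.d := by
    intro x hx
    by_contra hd
    have ha := a_mem_dia_dia (N := N) hx hd
    have hBd : (dia N (dia N (dia N (dia N A))))ᶜ ⊆ {V.d} := by
      intro y hy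
      by_contra hyd
      exact hy (mem_dia_dia_of_a ha hyd)
    have hBd' := (Set.subset_singleton_iff_eq.1 hBd).resolve_left hB
    have hdn : V.d ∉ dia N (dia N (dia N (dia N A))) := by
      have : V.d ∈ (dia N (dia N (dia N (dia N A))))ᶜ := by rw [hBd']; rfl
      exact this
    have hb : V.b3 ∈ dia N (dia N (dia N (dia N (dia N (dia N (dia N A))))ᶜ)) ∪ dia N A := by
      rw [hcov]; trivial
    rw [hBd'] at hb
    rcases hb with hb | hb
    · simp [mem_b3, mem_a, mem_b1, mem_b2, mem_l] at hb
    · simp only [mem_b3, mem_d, mem_c1, mem_b1, mem_a] at hb hdn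
      grind
  obtain ⟨x, hx⟩ := Set.nonempty_iff_ne_empty.2 hne
  ext y
  constructor
  · exact key y
  · rintro rfl
    rwa [← key x hx]

theorem singleton_d_spec (M : Set ℕ) :
    V.c2 ∈ (dia M (dia M (dia M (dia M {V.d}))))ᶜ ∧
    dia M (dia M (dia M (dia M (dia M (dia M (dia M {V.d}))))ᶜ)) ∪ dia M {V.d} = Set.univ := by
  have hc : V.c2 ∈ (dia M (dia M (dia M (dia M {V.d}))))ᶜ := by
    simp [mem_b2, mem_b3, mem_a, mem_b1, mem_l, mem_c2]
  refine ⟨hc, ?_⟩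
  have hu : ∀ j, V.u j ∈ (dia M (dia M (dia M (dia M {V.d}))))ᶜ := by
    intro j
    simp [mem_b2, mem_b3, mem_a, mem_b1, mem_l, mem_u]
  generalize (dia M (dia M (dia M (dia M {V.d}))))ᶜ = B at hc hu
  ext x
  simp only [Set.mem_union, Set.mem_univ, iff_true]
  cases x with
  | u j => exact .inl (subset_dia _ _ (subset_dia _ _ (subset_dia _ _ (hu j))))
  | _ => simp [mem_b2, mem_b3, mem_a, mem_b1, mem_c1, mem_l, mem_c2, mem_d, hc]

/-! ### Corresponding sets -/

/-- `X ∈ D_M` and `Y ∈ D_N` correspond to each other under `u`. -/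
def Cor (M N : Set ℕ) (u : Set V → Set V) (X Y : Set V) : Prop :=
  DN M X ∧ DN N Y ∧ u X = Y

section
variable {M N : Set ℕ} {u : Set V → Set V}

theorem Cor.union (hu : IsIso M N u) {X Y X' Y' : Set V} (h : Cor M N u X Y)
    (h' : Cor M N u X' Y') : Cor M N u (X ∪ X') (Y ∪ Y') :=
  ⟨h.1.union h'.1, h.2.1.union h'.2.1, by
    rw [hu.2.2.2.2.2.1 _ _ h.1 h'.1, h.2.2, h'.2.2]⟩

theorem Cor.compl (hu : IsIso M N u) {X Y : Set V} (h : Cor M N u X Y) :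
    Cor M N u Xᶜ Yᶜ :=
  ⟨h.1.compl, h.2.1.compl, by rw [hu.2.2.2.2.2.2.1 _ h.1, h.2.2]⟩

theorem Cor.dia (hu : IsIso M N u) {X Y : Set V} (h : Cor M N u X Y) :
    Cor M N u (dia M X) (dia N Y) :=
  ⟨h.1.diam, h.2.1.diam, by rw [hu.2.2.2.2.2.2.2 _ h.1, h.2.2]⟩

theorem Cor.inter (hu : IsIso M N u) {X Y X' Y' : Set V} (h : Cor M N u X Y)
    (h' : Cor M N u X' Y') : Cor M N u (X ∩ X') (Y ∩ Y') := by
  have := ((h.compl hu).union hu (h'.compl hu)).compl hu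
  simpa [Set.compl_union] using this

theorem Cor.diff (hu : IsIso M N u) {X Y X' Y' : Set V} (h : Cor M N u X Y)
    (h' : Cor M N u X' Y') : Cor M N u (X \ X') (Y \ Y') := by
  simpa [Set.sdiff_eq] using h.inter hu (h'.compl hu)

theorem DN.empty (M : Set ℕ) : DN M ∅ := by
  have := ((DN.base (N := M)).union (DN.base.compl)).compl
  simpa using this

theorem Cor.empty_iff (hu : IsIso M N u) {X Y : Set V} (h : Cor M N u X Y) :
    X = ∅ ↔ Y = ∅ := by
  obtain ⟨h1, h2, rfl⟩ := h
  constructor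
  · rintro rfl
    exact hu.2.2.2.1
  · intro h
    exact hu.2.1 _ _ h1 (DN.empty M) (by rw [h, hu.2.2.2.1])

theorem cor_d (hu : IsIso M N u) : Cor M N u {.d} {.d} := by
  have h : Cor M N u {.d} (u {.d}) := ⟨.base, hu.1 _ .base, rfl⟩
  obtain ⟨h1, h2⟩ := singleton_d_spec M
  have hB := ((((h.dia hu).dia hu).dia hu).dia hu).compl hu
  have hC := (((hB.dia hu).dia hu).dia hu).union hu (h.dia hu)
  have : u {.d} = {.d} := by
    apply eq_singleton_d (N := N)
    · rw [Ne, ← h.empty_iff hu]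
      simp
    · rw [Ne, ← hB.empty_iff hu]
      exact Set.nonempty_iff_ne_empty.1 ⟨_, h1⟩
    · rw [← hC.2.2, h2, hu.2.2.2.2.1]
  rwa [this] at h

/-! ### Terms along the frame -/

/-- The vertices at distance `4` from `d`. -/
def L4 : Set V := {x | x = .b2 ∨ x = .b3 ∨ ∃ i, x = .l i}

/-- The vertices at distance `5` from `d`. -/
def L5 : Set V := {x | x = .c2 ∨ ∃ i, x = .u i}

theorem EE_pos {N : Set ℕ} (hN : N ⊆ EE) : 0 ∉ N := fun h => absurd (hN h).2 (by simp)

theorem EE_even {N : Set ℕ} (hN : N ⊆ EE) {i : ℕ} (h : i ∈ N) : Even i := (hN h).1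

theorem t_c1 (N : Set ℕ) : dia N {.d} \ {.d} = {.c1} := by
  ext x
  cases x <;> simp [mem_b2, mem_b3, mem_a, mem_b1, mem_c1, mem_l, mem_c2, mem_u, mem_d]

theorem t_b1 (N : Set ℕ) : dia N {.c1} \ ({.c1} ∪ {.d}) = {.b1} := by
  ext x
  cases x <;> simp [mem_b2, mem_b3, mem_a, mem_b1, mem_c1, mem_l, mem_c2, mem_u, mem_d]

theorem t_a (N : Set ℕ) : dia N {.b1} \ ({.b1} ∪ {.c1}) = {.a} := by
  ext x
  cases x <;> simp [mem_b2, mem_b3, mem_a, mem_b1, mem_c1, mem_l, mem_c2, mem_u, mem_d]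

theorem t_L4 (N : Set ℕ) : dia N {.a} \ ({.a} ∪ {.b1}) = L4 := by
  ext x
  cases x <;> simp [L4, mem_b2, mem_b3, mem_a, mem_b1, mem_c1, mem_l, mem_c2, mem_u, mem_d]

theorem t_L5 : (L4 ∪ {.a} ∪ {.b1} ∪ {.c1} ∪ {.d})ᶜ = L5 := by
  ext x
  cases x <;> simp [L4, L5]

/-- `b₃` and `ℓ₀` are the vertices of `L4` without a neighbour in `L5`. -/
theorem t_E0 {N : Set ℕ} (hN : N ⊆ EE) : L4 \ dia N L5 = {.b3, .l 0} := by
  have h0 := EE_pos hN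
  ext x
  cases x with
  | l i =>
    have h : (∀ j, ¬ LU N i j) ↔ i = 0 := by
      constructor
      · intro h
        by_contra hi
        exact h (i - 1) (.inl (by omega))
      · rintro rfl j
        unfold LU
        grind
    simpa [L4, L5, mem_l] using h
  | _ => simp [L4, L5, mem_b2, mem_b3]

theorem t_l1 {N : Set ℕ} :
    (dia N {.b3, .l 0} ∩ L4) \ {.b3, .l 0} = {.l 1} := by
  ext x
  cases x <;> simp [L4, mem_b2, mem_l] <;> grind

theorem t_u0 {N : Set ℕ} (hN : N ⊆ EE) : dia N {.l 1} ∩ L5 = {.u 0} := by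
  have h1 : 1 ∉ N := fun h => absurd (EE_even hN h) (by decide)
  ext x
  cases x <;> simp [L5, mem_c2, mem_u, LU] <;> grind

theorem t_l2 {N : Set ℕ} (hN : N ⊆ EE) : (dia N {.u 0} ∩ L4) \ {.l 1} = {.l 2} := by
  have h0 := EE_pos hN
  ext x
  cases x <;> simp [L4, mem_b2, mem_b3, mem_l, LU] <;> grind

/-! ### Terms leading from `ℓ_i` to `ℓ_{i+2}`, where `i = 2k + 2` -/

theorem s_u1 {N : Set ℕ} {k : ℕ} (h : 2 * k + 2 ∉ N) :
    (dia N {.l (2 * k + 2)} ∩ L5) \ {.u (2 * k)} = {.u (2 * k + 1)} := by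
  ext x
  cases x <;> simp [L5, mem_c2, mem_u, LU] <;> grind

theorem s_l3 {N : Set ℕ} (hN : N ⊆ EE) {k : ℕ} (h : 2 * k + 2 ∉ N) :
    (dia N {.u (2 * k + 1)} ∩ L4) \ {.l (2 * k + 2)} = {.l (2 * k + 3)} := by
  have h1 : 2 * k + 1 ∉ N := fun h => by have := EE_even hN h; grind
  ext x
  cases x <;> simp [L4, mem_b2, mem_b3, mem_l, LU] <;> grind

theorem s_u2 {N : Set ℕ} (hN : N ⊆ EE) {k : ℕ} :
    (dia N {.l (2 * k + 3)} ∩ L5) \ {.u (2 * k + 1)} = {.u (2 * k + 2)} := by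
  have h1 : 2 * k + 3 ∉ N := fun h => by have := EE_even hN h; grind
  ext x
  cases x <;> simp [L5, mem_c2, mem_u, LU] <;> grind

theorem s_l4 {N : Set ℕ} {k : ℕ} (h : 2 * k + 2 ∉ N) :
    (dia N {.u (2 * k + 2)} ∩ L4) \ {.l (2 * k + 3)} = {.l (2 * k + 4)} := by
  ext x
  cases x <;> simp [L4, mem_b2, mem_b3, mem_l, LU] <;> grind

theorem s_T {N : Set ℕ} {k : ℕ} (h : 2 * k + 2 ∈ N) :
    (dia N {.l (2 * k + 2)} ∩ L5) \ {.u (2 * k)} = {.u (2 * k + 1), .u (2 * k + 2)} := by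
  ext x
  cases x <;> simp [L5, mem_c2, mem_u, LU] <;> grind

theorem s_K {N : Set ℕ} (hN : N ⊆ EE) {k : ℕ} :
    (dia N {.u (2 * k + 1), .u (2 * k + 2)} ∩ L4) \ {.l (2 * k + 2)} =
      {.l (2 * k + 3), .l (2 * k + 4)} := by
  have h1 : 2 * k + 1 ∉ N := fun h => by have := EE_even hN h; grind
  ext x
  cases x <;> simp [L4, mem_b2, mem_b3, mem_l, LU] <;> grind

theorem s_u2' {N : Set ℕ} {k : ℕ} (h : 2 * k + 2 ∈ N) :
    dia N {.l (2 * k + 3), .l (2 * k + 4)} ∩ {.u (2 * k + 1), .u (2 * k + 2)} =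
      {.u (2 * k + 2)} := by
  ext x
  cases x <;> simp [mem_u, LU] <;> grind

theorem s_l4' {N : Set ℕ} (hN : N ⊆ EE) {k : ℕ} :
    {.l (2 * k + 3), .l (2 * k + 4)} ∩ dia N (L5 \ {.u (2 * k + 1), .u (2 * k + 2)}) =
      {.l (2 * k + 4)} := by
  have h1 : 2 * k + 3 ∉ N := fun h => by have := EE_even hN h; grind
  have h3 : ∀ j, LU N (2 * k + 3) j → j = 2 * k + 1 ∨ j = 2 * k + 2 := by
    intro j
    unfold LU
    grind
  have h4 : LU N (2 * k + 4) (2 * k + 3) := .inl rfl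
  ext x
  cases x <;> simp [L5, mem_l] <;> grind

/-- For `i = 2k + 2 ∈ N`, the vertex `u_i` has `ℓ_i` as its only neighbour; for `i ∉ N` it is also
adjacent to `ℓ_{i+1}`, whence `test_not_mem`. -/
theorem test_mem {N : Set ℕ} (hN : N ⊆ EE) {k : ℕ} (h : 2 * k + 2 ∈ N) :
    ((dia N {.l (2 * k + 2)} ∩ L5) \ {.u (2 * k)}) \ dia N (L4 \ {.l (2 * k + 2)}) ≠ ∅ := by
  have h1 : 2 * k + 1 ∉ N := fun h => by have := EE_even hN h; grind
  rw [s_T h]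
  refine Set.nonempty_iff_ne_empty.1 ⟨.u (2 * k + 1), ?_⟩
  simp [mem_u, L4, LU]
  grind

theorem test_not_mem {N : Set ℕ} {k : ℕ} (h : 2 * k + 2 ∉ N) :
    ((dia N {.l (2 * k + 2)} ∩ L5) \ {.u (2 * k)}) \ dia N (L4 \ {.l (2 * k + 2)}) = ∅ := by
  rw [s_u1 h]
  ext x
  simp only [Set.mem_sdiff, Set.mem_singleton_iff, Set.mem_empty_iff_false, iff_false, not_and,
    not_not]
  rintro rfl
  rw [mem_u]
  exact .inr ⟨2 * k + 3, by unfold LU; grind, by simp [L4]⟩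

/-! ### Propagation and the first difference -/

theorem cor_base {M N : Set ℕ} {u : Set V → Set V} (hu : IsIso M N u) (hM : M ⊆ EE)
    (hN : N ⊆ EE) : Cor M N u L4 L4 ∧ Cor M N u L5 L5 ∧
      Cor M N u {.l 2} {.l 2} ∧ Cor M N u {.u 0} {.u 0} := by
  have hd := cor_d hu
  have hc1 := (hd.dia hu).diff hu hd
  rw [t_c1, t_c1] at hc1
  have hb1 := (hc1.dia hu).diff hu (hc1.union hu hd)
  rw [t_b1, t_b1] at hb1
  have ha := (hb1.dia hu).diff hu (hb1.union hu hc1)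
  rw [t_a, t_a] at ha
  have h4 := (ha.dia hu).diff hu (ha.union hu hb1)
  rw [t_L4, t_L4] at h4
  have h5 := ((((h4.union hu ha).union hu hb1).union hu hc1).union hu hd).compl hu
  rw [t_L5] at h5
  have hE := h4.diff hu (h5.dia hu)
  rw [t_E0 hM, t_E0 hN] at hE
  have hl1 := ((hE.dia hu).inter hu h4).diff hu hE
  rw [t_l1, t_l1] at hl1
  have hu0 := (hl1.dia hu).inter hu h5
  rw [t_u0 hM, t_u0 hN] at hu0
  have hl2 := ((hu0.dia hu).inter hu h4).diff hu hl1
  rw [t_l2 hM, t_l2 hN] at hl2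
  exact ⟨h4, h5, hl2, hu0⟩

/-- If `M` and `N` agree at `i = 2k + 2`, the correspondence passes from `{ℓ_i}, {u_{i-1}}` to
`{ℓ_{i+2}}, {u_{i+1}}`. -/
theorem cor_step {M N : Set ℕ} {u : Set V → Set V} (hu : IsIso M N u) (hM : M ⊆ EE)
    (hN : N ⊆ EE) {k : ℕ} (hk : 2 * k + 2 ∈ M ↔ 2 * k + 2 ∈ N)
    (hl : Cor M N u {.l (2 * k + 2)} {.l (2 * k + 2)})
    (hv : Cor M N u {.u (2 * k)} {.u (2 * k)}) :
    Cor M N u {.l (2 * k + 4)} {.l (2 * k + 4)} ∧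
      Cor M N u {.u (2 * k + 2)} {.u (2 * k + 2)} := by
  obtain ⟨h4, h5, -, -⟩ := cor_base hu hM hN
  have hT := ((hl.dia hu).inter hu h5).diff hu hv
  by_cases h : 2 * k + 2 ∈ M
  · have h' := hk.1 h
    rw [s_T h, s_T h'] at hT
    have hK := ((hT.dia hu).inter hu h4).diff hu hl
    rw [s_K hM, s_K hN] at hK
    have h1 := (hK.dia hu).inter hu hT
    rw [s_u2' h, s_u2' h'] at h1
    have h2 := hK.inter hu ((h5.diff hu hT).dia hu)
    rw [s_l4' hM, s_l4' hN] at h2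
    exact ⟨h2, h1⟩
  · have h' := mt hk.2 h
    rw [s_u1 h, s_u1 h'] at hT
    have h3 := ((hT.dia hu).inter hu h4).diff hu hl
    rw [s_l3 hM h, s_l3 hN h'] at h3
    have h1 := ((h3.dia hu).inter hu h5).diff hu hT
    rw [s_u2 hM, s_u2 hN] at h1
    have h2 := ((h1.dia hu).inter hu h4).diff hu h3
    rw [s_l4 h, s_l4 h'] at h2
    exact ⟨h2, h1⟩

theorem agree {M N : Set ℕ} {u : Set V → Set V} (hu : IsIso M N u) (hM : M ⊆ EE)
    (hN : N ⊆ EE) (k : ℕ) : 2 * k + 2 ∈ M ↔ 2 * k + 2 ∈ N := by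
  obtain ⟨h4, h5, hl2, hu0⟩ := cor_base hu hM hN
  have test : ∀ k, Cor M N u {.l (2 * k + 2)} {.l (2 * k + 2)} →
      Cor M N u {.u (2 * k)} {.u (2 * k)} → (2 * k + 2 ∈ M ↔ 2 * k + 2 ∈ N) := by
    intro k hl hv
    have := ((((hl.dia hu).inter hu h5).diff hu hv).diff hu
      ((h4.diff hu hl).dia hu)).empty_iff hu
    by_cases h : 2 * k + 2 ∈ M <;> by_cases h' : 2 * k + 2 ∈ N
    · simp [h, h']
    · exact absurd (this.2 (test_not_mem h')) (test_mem hM h)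
    · exact absurd (this.1 (test_not_mem h)) (test_mem hN h')
    · simp [h, h']
  have all : ∀ k, Cor M N u {.l (2 * k + 2)} {.l (2 * k + 2)} ∧
      Cor M N u {.u (2 * k)} {.u (2 * k)} := by
    intro k
    induction k with
    | zero => exact ⟨hl2, hu0⟩
    | succ k ih => exact cor_step hu hM hN (test k ih.1 ih.2) ih.1 ih.2
  exact test k (all k).1 (all k).2

theorem infinite_EE : EE.Infinite :=
  Set.infinite_of_injective_forall_mem (f := fun k : ℕ => 2 * k + 2)
    (fun a b h => by simpa using h) (fun k => ⟨by grind, by grind⟩)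

/-- The family `{D_N : N ⊆ 𝔼}` consists of continuum many pairwise non-isomorphic
algebras: distinct `M, N ⊆ 𝔼` give non-isomorphic algebras, and there are `2^ℵ₀`
subsets of `𝔼`. -/
theorem continuum_many_nonisomorphic :
    (∀ M N : Set ℕ, M ⊆ EE → N ⊆ EE → M ≠ N →
      ¬ ∃ u : Set V → Set V, IsIso M N u) ∧
    Cardinal.mk {N : Set ℕ // N ⊆ EE} = 2 ^ Cardinal.aleph0 := by
  constructor
  · rintro M N hM hN hne ⟨u, hu⟩
    apply hne
    have key := agree hu hM hN
    ext i
    constructor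
    · intro hi
      obtain ⟨⟨m, rfl⟩, hp⟩ := hM hi
      obtain ⟨k, rfl⟩ : ∃ k, m = k + 1 := ⟨m - 1, by omega⟩
      have := key k
      rw [show 2 * k + 2 = k + 1 + (k + 1) by ring] at this
      exact this.1 hi
    · intro hi
      obtain ⟨⟨m, rfl⟩, hp⟩ := hN hi
      obtain ⟨k, rfl⟩ : ∃ k, m = k + 1 := ⟨m - 1, by omega⟩
      have := key k
      rw [show 2 * k + 2 = k + 1 + (k + 1) by ring] at this
      exact this.2 hi
  · have h : Cardinal.mk EE = Cardinal.aleph0 := by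
      have := infinite_EE.to_subtype
      exact Cardinal.mk_eq_aleph0 _
    rw [← h, ← Cardinal.mk_set]
    exact Cardinal.mk_congr (Equiv.Set.powerset EE)
end
end
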